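/- arXiv:1405.3698 — 2 statements merged into one kernel-verified Lean document; each statement's English description precedes it below -/
import Mathlib

section
/- For all vectors v, w ∈ ℝ⁷, the identity (1/3!) · (ι_v φ₀) ∧ (ι_w φ₀) ∧ φ₀ = g₀(v,w) · 𝒱 holds, where g₀ is the standard Euclidean inner product and 𝒱 = dx₁ ∧ ⋯ ∧ dx₇ is the standard volume form. In particular the bilinear form 𝔅₀ defined by this equation is positive definite. -/
noncomputable section

open scoped BigOperators

def pickCoords {n k : ℕ} (idx : Fin k → Fin n) : (Fin n → ℝ) →ₗ[ℝ] (Fin k → ℝ) :=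
  LinearMap.pi fun a => LinearMap.proj (idx a)

def dxs {n k : ℕ} (idx : Fin k → Fin n) : (Fin n → ℝ) [⋀^Fin k]→ₗ[ℝ] ℝ :=
  (Matrix.detRowAlternating).compLinearMap (pickCoords idx)

/-- The standard `G₂` three-form on `ℝ⁷` (with `0`-based indices). -/
def phi0 : (Fin 7 → ℝ) [⋀^Fin 3]→ₗ[ℝ] ℝ :=
  dxs ![0,1,2] + dxs ![0,3,4] + dxs ![0,5,6] + dxs ![1,3,5]
    - dxs ![1,4,6] - dxs ![2,3,6] - dxs ![2,4,5]

/-- Wedge product of scalar-valued alternating forms. -/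
def wedgeAM {V : Type*} [AddCommGroup V] [Module ℝ V] {k l : ℕ}
    (α : V [⋀^Fin k]→ₗ[ℝ] ℝ) (β : V [⋀^Fin l]→ₗ[ℝ] ℝ) : V [⋀^Fin (k + l)]→ₗ[ℝ] ℝ :=
  (TensorProduct.lid ℝ ℝ).toLinearMap.compAlternatingMap
    ((α.domCoprod β).domDomCongr finSumFinEquiv)

/-- The standard volume form `dx₁ ∧ ⋯ ∧ dx₇` on `ℝ⁷`. -/
def vol7 : (Fin 7 → ℝ) [⋀^Fin 7]→ₗ[ℝ] ℝ := Matrix.detRowAlternating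

theorem dxs_apply {n k : ℕ} (idx : Fin k → Fin n) (v : Fin k → Fin n → ℝ) :
    dxs idx v = Matrix.det (Matrix.of fun a b => v a (idx b)) := rfl

/-- The monomial multilinear form whose alternatization is `dxs`. -/
def mono {n k : ℕ} (idx : Fin k → Fin n) : MultilinearMap ℝ (fun _ : Fin k => (Fin n → ℝ)) ℝ :=
  (MultilinearMap.mkPiAlgebra ℝ (Fin k) ℝ).compLinearMap fun a => LinearMap.proj (idx a)

theorem dxs_eq_alternatization {n k : ℕ} (idx : Fin k → Fin n) :
    dxs idx = MultilinearMap.alternatization (mono idx) := by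
  ext v
  rw [dxs_apply, Matrix.det_apply, MultilinearMap.alternatization_apply]
  rfl

theorem wedge_dxs {n k l : ℕ} (I : Fin k → Fin n) (J : Fin l → Fin n) :
    wedgeAM (dxs I) (dxs J) = dxs (Fin.append I J) := by
  ext v
  rw [dxs_apply, ← Matrix.det_submatrix_equiv_self finSumFinEquiv, Matrix.det_apply]
  simp only [wedgeAM, dxs_eq_alternatization, ← MultilinearMap.domCoprod_alternization]
  simp only [LinearMap.compAlternatingMap_apply, AlternatingMap.domDomCongr_apply,
    MultilinearMap.alternatization_apply, map_sum]
  refine Finset.sum_congr rfl fun σ _ => ?_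
  rcases Int.units_eq_one_or (Equiv.Perm.sign σ) with h | h <;>
  simp [h, mono, MultilinearMap.domDomCongr_apply, Fintype.prod_sum_type]

theorem alt_sum_apply {V N ι κ : Type*} [AddCommGroup V] [Module ℝ V]
    [AddCommGroup N] [Module ℝ N] (s : Finset ι) (f : ι → V [⋀^κ]→ₗ[ℝ] N) (v : κ → V) : (∑ i ∈ s, f i) v = ∑ i ∈ s, f i v := by
  classical
  induction s using Finset.induction_on with
  | empty => simp
  | insert a s ha ih => simp [Finset.sum_insert ha, ih]

theorem sum_swap_three {α β γ : Type*} [Fintype α] [Fintype β] [Fintype γ] (f : α → β → γ → ℝ) :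
    ∑ a, ∑ b, ∑ c, f a b c = ∑ b, ∑ c, ∑ a, f a b c := by
  rw [Finset.sum_comm]
  exact Finset.sum_congr rfl fun b _ => Finset.sum_comm

section bilin
variable {V : Type*} [AddCommGroup V] [Module ℝ V] {k l : ℕ}

theorem wedge_eq (α : V [⋀^Fin k]→ₗ[ℝ] ℝ) (β : V [⋀^Fin l]→ₗ[ℝ] ℝ) (v) :
    wedgeAM α β v = TensorProduct.lid ℝ ℝ
      (AlternatingMap.domCoprod' (α ⊗ₜ[ℝ] β) (v ∘ finSumFinEquiv)) := rfl

open scoped TensorProduct in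
theorem wedge_sum_left {ι : Type*} (s : Finset ι) (c : ι → ℝ) (α : ι → V [⋀^Fin k]→ₗ[ℝ] ℝ)
    (β : V [⋀^Fin l]→ₗ[ℝ] ℝ) :
    wedgeAM (∑ i ∈ s, c i • α i) β = ∑ i ∈ s, c i • wedgeAM (α i) β := by
  ext v
  simp only [wedge_eq, TensorProduct.sum_tmul, ← TensorProduct.smul_tmul', alt_sum_apply, map_sum,
    map_smul, AlternatingMap.smul_apply]

theorem wedge_sum_right {ι : Type*} (s : Finset ι) (c : ι → ℝ) (α : V [⋀^Fin k]→ₗ[ℝ] ℝ)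
    (β : ι → V [⋀^Fin l]→ₗ[ℝ] ℝ) :
    wedgeAM α (∑ i ∈ s, c i • β i) = ∑ i ∈ s, c i • wedgeAM α (β i) := by
  ext v
  simp only [wedge_eq, TensorProduct.tmul_sum, TensorProduct.tmul_smul, alt_sum_apply, map_sum,
    map_smul, AlternatingMap.smul_apply]

end bilin

theorem curry_dxs {n k : ℕ} (I : Fin (k + 1) → Fin n) (v : Fin n → ℝ) :
    (dxs I).curryLeft v
      = ∑ p : Fin (k + 1), ((-1) ^ (p : ℕ) * v (I p)) • dxs (I ∘ p.succAbove) := by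
  ext m
  rw [AlternatingMap.curryLeft_apply_apply, dxs_apply, Matrix.det_succ_row_zero]
  simp [alt_sum_apply, dxs_apply]
  rfl

/-- Remove one index from a triple. -/
def skip (T : Fin 3 → Fin 7) (p : Fin 3) : Fin 2 → Fin 7 := fun i => T (p.succAbove i)

theorem curry_dxs_three (T : Fin 3 → Fin 7) (v : Fin 7 → ℝ) :
    (dxs T).curryLeft v = ∑ p : Fin 3, ((-1) ^ (p : ℕ) * v (T p)) • dxs (skip T p) :=
  curry_dxs T v

/-- Index triples of `phi0`. -/
def trip : Fin 7 → Fin 3 → Fin 7 :=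
  ![![0,1,2], ![0,3,4], ![0,5,6], ![1,3,5], ![1,4,6], ![2,3,6], ![2,4,5]]

/-- Signs of `phi0`. -/
def sgn : Fin 7 → ℤ := ![1, 1, 1, 1, -1, -1, -1]

theorem phi0_eq : phi0 = ∑ t, (sgn t : ℝ) • dxs (trip t) := by
  ext m
  simp [Fin.sum_univ_seven, phi0, sgn, trip, sub_eq_add_neg]

/-- The Levi-Civita symbol. -/
def eps {n : ℕ} (I : Fin n → Fin n) : ℤ :=
  ∏ i, ∏ j ∈ Finset.Ioi i, if I i < I j then 1 else if I j < I i then -1 else 0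

theorem dxs_basis {n : ℕ} (I : Fin n → Fin n) :
    dxs I (fun i => Pi.single i 1) = (eps I : ℝ) := by
  rw [dxs_apply]
  by_cases h : Function.Injective I
  · let σ : Equiv.Perm (Fin n) := Equiv.ofBijective I (Finite.injective_iff_bijective.1 h)
    have h1 : (Matrix.of fun a b => (Pi.single a 1 : Fin n → ℝ) (I b))
        = (1 : Matrix (Fin n) (Fin n) ℝ).submatrix id σ := by
      ext a b
      simp [σ, Matrix.one_apply, Pi.single_apply, eq_comm]
    have h2 : eps I = (Equiv.Perm.sign σ : ℤ) := by
      rw [Equiv.Perm.sign_eq_prod_prod_Ioi]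
      simp only [eps, Units.coe_prod]
      refine Finset.prod_congr rfl fun i _ => Finset.prod_congr rfl fun j hj => ?_
      have hij : I i ≠ I j := fun e => (Finset.mem_Ioi.1 hj).ne (h e)
      simp only [σ, Equiv.ofBijective_apply]
      rcases lt_or_gt_of_ne hij with h3 | h3
      · simp [h3]
      · simp [h3, h3.not_gt]
    rw [h1, Matrix.det_permute', h2]
    simp
  · have : ∃ i j, i < j ∧ I i = I j := by
      simp only [Function.Injective, not_forall] at h
      obtain ⟨a, b, e, hne⟩ := h
      rcases lt_or_gt_of_ne hne with h3 | h3
      · exact ⟨a, b, h3, e⟩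
      · exact ⟨b, a, h3, e.symm⟩
    obtain ⟨i, j, hij, e⟩ := this
    rw [Matrix.det_zero_of_column_eq hij.ne (by simp [e])]
    have : eps I = 0 := Finset.prod_eq_zero (Finset.mem_univ i)
      (Finset.prod_eq_zero (Finset.mem_Ioi.2 hij) (by simp [e]))
    simp [this]

/-- Coefficients of `ι_v φ₀`. -/
def cv (v : Fin 7 → ℝ) (x : Fin 7 × Fin 3) : ℝ :=
  (sgn x.1 : ℝ) * ((-1) ^ (x.2 : ℕ) * v (trip x.1 x.2))

/-- Coefficients of `φ₀`. -/
def cs (r : Fin 7) : ℝ := sgn r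

/-- Index pairs of `ι_v φ₀`. -/
def pr (x : Fin 7 × Fin 3) : Fin 2 → Fin 7 := skip (trip x.1) x.2

/-- The standard basis, indexed by `Fin (2 + 2 + 3)`. -/
def stdB : Fin (2 + 2 + 3) → Fin 7 → ℝ := fun i => Pi.single i 1

theorem stdB_eq : stdB = fun i : Fin 7 => (Pi.single i 1 : Fin 7 → ℝ) := rfl

theorem dxs_basis_of_eq {n : ℕ} (I : Fin n → Fin n) (z : Fin n → Fin n → ℝ)
    (hz : z = fun i => Pi.single i 1) : dxs I z = (eps I : ℝ) := by
  subst hz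
  exact dxs_basis I

/-- Coefficient of a pair of contracted terms. -/
def coef (t : Fin 7) (p : Fin 3) (u : Fin 7) (q : Fin 3) : ℤ :=
  ∑ r, sgn t * (-1) ^ (p : ℕ) * (sgn u * (-1) ^ (q : ℕ)) * sgn r *
    eps (n := 7) (Fin.append (Fin.append (pr (t, p)) (pr (u, q))) (trip r))

theorem curry_phi0 (v : Fin 7 → ℝ) :
    phi0.curryLeft v = ∑ x : Fin 7 × Fin 3,
      ((sgn x.1 : ℝ) * ((-1) ^ (x.2 : ℕ) * v (trip x.1 x.2))) •
        dxs (skip (trip x.1) x.2) := by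
  have : phi0.curryLeft v = ∑ t, (sgn t : ℝ) • (dxs (trip t)).curryLeft v := by
    ext m
    simp [phi0_eq, alt_sum_apply]
  rw [this, Fintype.sum_prod_type]
  simp only [curry_dxs_three, Finset.smul_sum, smul_smul]

/-- Sign of `a` against the entries of a list (`0` on a repetition). -/
def sg (a : ℕ) : List ℕ → ℤ
  | [] => 1
  | b :: l => bif Nat.blt a b then sg a l else bif Nat.blt b a then -(sg a l) else 0

/-- A quickly computable form of the Levi-Civita symbol. -/
def lc : List ℕ → ℤ
  | [] => 1
  | a :: l => sg a l * lc l

theorem sg_ofFn {m n : ℕ} (a : Fin m) (I : Fin n → Fin m) :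
    sg a (List.ofFn fun i => (I i : ℕ))
      = ∏ j, if a < I j then 1 else if I j < a then -1 else 0 := by
  induction n with
  | zero => simp [sg]
  | succ n ih =>
    rw [List.ofFn_succ, Fin.prod_univ_succ, sg, ih fun i => I i.succ]
    rcases lt_trichotomy a (I 0) with h | h | h
    · have h2 : Nat.blt a (I 0) = true := by
        rw [Nat.blt_eq]
        exact h
      rw [h2, if_pos h]
      simp
    · have h2 : Nat.blt (I 0) (I 0) = false := by
        rw [← Bool.not_eq_true, Nat.blt_eq]
        exact lt_irrefl _
      rw [h, h2]
      simp
    · have h1 : ¬ a < I 0 := h.not_gt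
      have h2 : Nat.blt a (I 0) = false := by
        rw [← Bool.not_eq_true, Nat.blt_eq]
        exact h1
      have h3 : Nat.blt (I 0) a = true := by
        rw [Nat.blt_eq]
        exact h
      rw [h2, h3, if_neg h1, if_pos h]
      simp

theorem lc_ofFn {m n : ℕ} (I : Fin n → Fin m) :
    lc (List.ofFn fun i => (I i : ℕ))
      = ∏ i, ∏ j ∈ Finset.Ioi i, if I i < I j then 1 else if I j < I i then -1 else 0 := by
  induction n with
  | zero => simp [lc]
  | succ n ih =>
    rw [List.ofFn_succ, Fin.prod_univ_succ, lc, ih fun i => I i.succ, sg_ofFn (I 0),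
      Fin.prod_Ioi_zero]
    simp only [Fin.prod_Ioi_succ]

/-- Entries of the concatenated multi-index. -/
def entries (a b : Fin 2 → Fin 7) (c : Fin 3 → Fin 7) : List ℕ :=
  [a 0, a 1, b 0, b 1, c 0, c 1, c 2]

theorem eps_eq_lc (a b : Fin 2 → Fin 7) (c : Fin 3 → Fin 7) :
    eps (n := 7) (Fin.append (Fin.append a b) c) = lc (entries a b c) := by
  have h := lc_ofFn (n := 7) (Fin.append (Fin.append a b) c)
  exact h.symm

/-- The combinatorial identity, in computable form. -/
theorem coef_sum_fast : ∀ i j : Fin 7,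
    (∑ x : Fin 7 × Fin 3, if trip x.1 x.2 = i then
      ∑ y : Fin 7 × Fin 3, if trip y.1 y.2 = j then
        ∑ r, sgn x.1 * (-1) ^ (x.2 : ℕ) * (sgn y.1 * (-1) ^ (y.2 : ℕ)) * sgn r *
          lc (entries (pr x) (pr y) (trip r)) else 0 else 0)
      = if i = j then 6 else 0 := by
  decide +kernel

/-- The combinatorial identity. -/
theorem coef_sum (i j : Fin 7) :
    (∑ x : Fin 7 × Fin 3, ∑ y : Fin 7 × Fin 3,
      if trip x.1 x.2 = i ∧ trip y.1 y.2 = j then coef x.1 x.2 y.1 y.2 else 0)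
      = if i = j then 6 else 0 := by
  rw [← coef_sum_fast i j]
  refine Finset.sum_congr rfl fun x _ => ?_
  by_cases h : trip x.1 x.2 = i
  · simp only [h, true_and, if_true, coef, eps_eq_lc]
  · simp [h]

theorem dxs_basis_seven (I : Fin (2 + 2 + 3) → Fin 7) :
    dxs I stdB = (eps (n := 7) I : ℝ) := by
  have h := dxs_basis_of_eq (n := 7) I stdB stdB_eq
  with_reducible_and_instances exact h

theorem term_basis (x y : Fin 7 × Fin 3) (v w : Fin 7 → ℝ) :
    (cv v x * cv w y) • ∑ r, cs r • dxs (Fin.append (Fin.append (pr x) (pr y)) (trip r)) stdB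
      = (coef x.1 x.2 y.1 y.2 : ℝ) * (v (trip x.1 x.2) * w (trip y.1 y.2)) := by
  simp only [dxs_basis_seven]
  unfold coef
  rw [Int.cast_sum, Finset.sum_mul, Finset.smul_sum]
  refine Finset.sum_congr rfl fun r _ => ?_
  simp only [smul_eq_mul, cv, cs]
  push_cast
  ring

theorem wedge_form {n k l m : ℕ} {ι κ ρ : Type*} [Fintype ι] [Fintype κ] [Fintype ρ]
    (a : ι → ℝ) (b : κ → ℝ) (c : ρ → ℝ)
    (I : ι → Fin k → Fin n) (J : κ → Fin l → Fin n) (K : ρ → Fin m → Fin n)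
    (z : Fin (k + l + m) → Fin n → ℝ) :
    wedgeAM (wedgeAM (∑ x, a x • dxs (I x)) (∑ y, b y • dxs (J y))) (∑ r, c r • dxs (K r)) z
      = ∑ x, ∑ y, (a x * b y) •
          ∑ r, c r • dxs (Fin.append (Fin.append (I x) (J y)) (K r)) z := by
  have h : wedgeAM (∑ x, a x • dxs (I x)) (∑ y, b y • dxs (J y))
      = ∑ x : ι × κ, (a x.1 * b x.2) • dxs (Fin.append (I x.1) (J x.2)) := by
    rw [wedge_sum_left, Fintype.sum_prod_type]
    simp only [wedge_sum_right, wedge_dxs, Finset.smul_sum, smul_smul]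
  rw [h, wedge_sum_left, alt_sum_apply, Fintype.sum_prod_type]
  simp only [wedge_sum_right, wedge_dxs, alt_sum_apply, AlternatingMap.smul_apply]

theorem wedge_form_of_eq {n k l m : ℕ} {ι κ ρ : Type*} [Fintype ι] [Fintype κ] [Fintype ρ]
    (a : ι → ℝ) (b : κ → ℝ) (c : ρ → ℝ)
    (I : ι → Fin k → Fin n) (J : κ → Fin l → Fin n) (K : ρ → Fin m → Fin n)
    (z : Fin (k + l + m) → Fin n → ℝ)
    (A : (Fin n → ℝ) [⋀^Fin k]→ₗ[ℝ] ℝ) (B : (Fin n → ℝ) [⋀^Fin l]→ₗ[ℝ] ℝ)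
    (C : (Fin n → ℝ) [⋀^Fin m]→ₗ[ℝ] ℝ) (hA : A = ∑ x, a x • dxs (I x))
    (hB : B = ∑ y, b y • dxs (J y)) (hC : C = ∑ r, c r • dxs (K r)) :
    wedgeAM (wedgeAM A B) C z = ∑ x, ∑ y, (a x * b y) •
          ∑ r, c r • dxs (Fin.append (Fin.append (I x) (J y)) (K r)) z := by
  subst hA hB hC
  exact wedge_form a b c I J K z

theorem wedge_phi0 (v w : Fin 7 → ℝ) (z : Fin (2 + 2 + 3) → Fin 7 → ℝ) :
    wedgeAM (wedgeAM (phi0.curryLeft v) (phi0.curryLeft w)) phi0 z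
      = ∑ x, ∑ y, (cv v x * cv w y) •
          ∑ r, cs r • dxs (Fin.append (Fin.append (pr x) (pr y)) (trip r)) z := by
  have hv : phi0.curryLeft v = ∑ x, cv v x • dxs (pr x) := curry_phi0 v
  have hw : phi0.curryLeft w = ∑ x, cv w x • dxs (pr x) := curry_phi0 w
  have hp : phi0 = ∑ r, cs r • dxs (trip r) := phi0_eq
  have h := wedge_form_of_eq (n := 7) (k := 2) (l := 2) (m := 3)
    (cv v) (cv w) cs pr pr trip z _ _ _ hv hw hp
  with_reducible_and_instances exact h

theorem wedge_basis (v w : Fin 7 → ℝ) :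
    wedgeAM (wedgeAM (phi0.curryLeft v) (phi0.curryLeft w)) phi0 stdB
      = ∑ x : Fin 7 × Fin 3, ∑ y : Fin 7 × Fin 3,
        (coef x.1 x.2 y.1 y.2 : ℝ) * (v (trip x.1 x.2) * w (trip y.1 y.2)) := by
  rw [wedge_phi0]
  exact Finset.sum_congr rfl fun x _ => Finset.sum_congr rfl fun y _ => term_basis x y v w

theorem wedge_basis' (v w : Fin 7 → ℝ) :
    wedgeAM (wedgeAM (phi0.curryLeft v) (phi0.curryLeft w)) phi0 stdB
      = 6 * ∑ i, v i * w i := by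
  rw [wedge_basis]
  have key : ∀ x y : Fin 7 × Fin 3,
      (coef x.1 x.2 y.1 y.2 : ℝ) * (v (trip x.1 x.2) * w (trip y.1 y.2))
      = ∑ i, ∑ j, ((if trip x.1 x.2 = i ∧ trip y.1 y.2 = j then coef x.1 x.2 y.1 y.2 else 0 : ℤ)
          : ℝ) * (v i * w j) := by
    intro x y
    rw [Finset.sum_eq_single (trip x.1 x.2), Finset.sum_eq_single (trip y.1 y.2)]
    · simp
    · intro b _ hb
      simp [hb.symm]
    · simp
    · intro b _ hb
      simp [hb.symm]
    · simp
  calc _ = ∑ i, ∑ j, ((∑ x : Fin 7 × Fin 3, ∑ y : Fin 7 × Fin 3,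
      if trip x.1 x.2 = i ∧ trip y.1 y.2 = j then coef x.1 x.2 y.1 y.2 else 0 : ℤ) : ℝ)
        * (v i * w j) := by
        simp only [key, Int.cast_sum, Finset.sum_mul]
        have h : ∀ g : (Fin 7 × Fin 3) → (Fin 7 × Fin 3) → Fin 7 → Fin 7 → ℝ,
            ∑ x, ∑ y, ∑ i, ∑ j, g x y i j = ∑ i, ∑ j, ∑ x, ∑ y, g x y i j := by
          intro g
          rw [← sum_swap_three fun x i j => ∑ y, g x y i j]
          exact Finset.sum_congr rfl fun x _ => sum_swap_three _
        exact h _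
    _ = _ := by
        simp only [coef_sum]
        simp [Finset.mul_sum]

theorem eq_of_basis (W : (Fin 7 → ℝ) [⋀^Fin 7]→ₗ[ℝ] ℝ) (s : ℝ)
    (z : Fin 7 → Fin 7 → ℝ) (hz : z = fun i => Pi.single i 1) (h : W z = 6 * s) : ((1 : ℝ)/6) • W = s • vol7 := by
  have h2 := AlternatingMap.eq_smul_basis_det (Pi.basisFun ℝ (Fin 7)) W
  have h3 : (Pi.basisFun ℝ (Fin 7)).det = vol7 := Pi.basisFun_det
  have h4 : (⇑(Pi.basisFun ℝ (Fin 7)) : Fin 7 → Fin 7 → ℝ) = fun i => Pi.single i 1 := by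
    ext i; simp
  rw [h3, h4, ← hz, h] at h2
  rw [h2, smul_smul]
  congr 1
  ring

theorem main_id (v w : Fin 7 → ℝ) :
      ((1 : ℝ)/6) • wedgeAM (wedgeAM (phi0.curryLeft v) (phi0.curryLeft w)) phi0
        = (∑ i, v i * w i) • vol7 := by
  have h := wedge_basis' v w
  generalize wedgeAM (wedgeAM (phi0.curryLeft v) (phi0.curryLeft w)) phi0 = W at h ⊢
  have h2 := eq_of_basis W (∑ i, v i * w i) stdB stdB_eq
  have h3 := h2 (by with_reducible_and_instances exact h)
  with_reducible_and_instances exact h3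

/-- For all `v, w ∈ ℝ⁷` one has
`(1/3!) · (ι_v φ₀) ∧ (ι_w φ₀) ∧ φ₀ = g₀(v,w) · 𝒱`, where `g₀` is the Euclidean inner product and
`𝒱` the standard volume form; in particular the bilinear form `𝔅₀` so defined is positive
definite. -/
theorem contraction_wedge_phi0 :
    (∀ v w : Fin 7 → ℝ,
      ((1 : ℝ)/6) • wedgeAM (wedgeAM (phi0.curryLeft v) (phi0.curryLeft w)) phi0
        = (∑ i, v i * w i) • vol7) ∧
    (∀ v : Fin 7 → ℝ, v ≠ 0 → ∃ c : ℝ, 0 < c ∧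
      ((1 : ℝ)/6) • wedgeAM (wedgeAM (phi0.curryLeft v) (phi0.curryLeft v)) phi0 = c • vol7) := by
  refine ⟨main_id, fun v hv => ⟨∑ i, v i * v i, ?_, main_id v v⟩⟩
  obtain ⟨i, hi⟩ := Function.ne_iff.1 hv
  exact Finset.sum_pos' (fun j _ => mul_self_nonneg _)
    ⟨i, Finset.mem_univ _, mul_self_pos.2 hi⟩

end
end

section
/- Let V be an 8-dimensional oriented vector space with an admissible four-form Ω. Then for every nonzero v ∈ V and every 7-dimensional subspace H ⊂ V transverse to v, the restriction (ι_v Ω)|_H is a positive three-form on H (with H oriented by the orientation of V and v). -/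
noncomputable section

open scoped RealInnerProductSpace BigOperators

/-- The Cayley four-form `Ω₀` on `ℝ⁸` (with `0`-based indices). -/
def Omega0 : (Fin 8 → ℝ) [⋀^Fin 4]→ₗ[ℝ] ℝ :=
  dxs ![0,1,2,3] + dxs ![0,1,4,5] + dxs ![0,1,6,7] + dxs ![0,2,4,6]
    - dxs ![0,2,5,7] - dxs ![0,3,4,7] - dxs ![0,3,5,6] - dxs ![1,2,4,7]
    - dxs ![1,2,5,6] - dxs ![1,3,4,6] + dxs ![1,3,5,7] + dxs ![2,3,4,5]
    + dxs ![2,3,6,7] + dxs ![4,5,6,7]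

/-- The `G₂` three-form `φ₀` written in the last seven coordinates of `ℝ⁸` and extended to `ℝ⁸`
annihilating `e₁`. -/
def phi0ext : (Fin 8 → ℝ) [⋀^Fin 3]→ₗ[ℝ] ℝ :=
  dxs ![1,2,3] + dxs ![1,4,5] + dxs ![1,6,7] + dxs ![2,4,6]
    - dxs ![2,5,7] - dxs ![3,4,7] - dxs ![3,5,6]

/-- The inclusion `ℝ⁷ ↪ ℝ⁸` onto the last seven coordinates. -/
def incl7 : (Fin 7 → ℝ) →ₗ[ℝ] (Fin 8 → ℝ) :=
  LinearMap.pi fun i : Fin 8 =>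
    Fin.cases (motive := fun _ => (Fin 7 → ℝ) →ₗ[ℝ] ℝ) 0 (fun j => LinearMap.proj j) i

variable {V : Type*} [NormedAddCommGroup V] [InnerProductSpace ℝ V] [FiniteDimensional ℝ V]

/-- `f : ℝ⁸ → V` is orientation-preserving. -/
def OrientedEquiv (o : Orientation ℝ V (Fin 8)) (f : (Fin 8 → ℝ) ≃ₗ[ℝ] V) : Prop :=
  Orientation.map (Fin 8) f ((Pi.basisFun ℝ (Fin 8)).orientation) = o

/-- `f : ℝ⁸ → V` is an isometry for the standard inner product. -/
def IsometricEquiv (f : (Fin 8 → ℝ) ≃ₗ[ℝ] V) : Prop :=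
  ∀ x y : Fin 8 → ℝ, ⟪f x, f y⟫ = ∑ i, x i * y i

/-- A four-form `Ω` on the oriented `8`-dimensional space `V` is *admissible* if some
orientation-preserving isomorphism `ℝ⁸ → V` pulls it back to the Cayley form `Ω₀`. -/
def AdmissibleForm (o : Orientation ℝ V (Fin 8)) (Ω : V [⋀^Fin 4]→ₗ[ℝ] ℝ) : Prop :=
  ∃ f : (Fin 8 → ℝ) ≃ₗ[ℝ] V, OrientedEquiv o f ∧ Ω.compLinearMap f.toLinearMap = Omega0

/-- `Ω` is admissible and the inner product it induces is exactly the inner product of `V`. -/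
def AdmissibleFormInducing (o : Orientation ℝ V (Fin 8)) (Ω : V [⋀^Fin 4]→ₗ[ℝ] ℝ) : Prop :=
  ∃ f : (Fin 8 → ℝ) ≃ₗ[ℝ] V, OrientedEquiv o f ∧ IsometricEquiv f ∧
    Ω.compLinearMap f.toLinearMap = Omega0

/-- The three-form `φ` on `V` (annihilating `v`) is, on the hyperplane `H` endowed with the
orientation induced by `o` and `v`, a positive three-form whose associated inner product is the
restriction of the inner product of `V`; moreover `v` is a unit vector orthogonal to `H`. -/
def PositiveAdaptedInducing (o : Orientation ℝ V (Fin 8)) (φ : V [⋀^Fin 3]→ₗ[ℝ] ℝ)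
    (v : V) (H : Submodule ℝ V) : Prop :=
  ∃ f : (Fin 8 → ℝ) ≃ₗ[ℝ] V, OrientedEquiv o f ∧ IsometricEquiv f ∧
    f (Pi.single 0 1) = v ∧ (∀ x : Fin 8 → ℝ, x 0 = 0 → f x ∈ H) ∧
    φ.compLinearMap f.toLinearMap = phi0ext

/-- The one-form `v♭ = ⟪v,·⟫`. -/
def flatForm (v : V) : V [⋀^Fin 1]→ₗ[ℝ] ℝ :=
  AlternatingMap.ofSubsingleton ℝ V ℝ 0 (innerₗ V v)

/-- The inner product induced on `k`-forms on `V`, computed in an orthonormal basis. -/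
def formInnerV (k : ℕ) (α β : V [⋀^Fin k]→ₗ[ℝ] ℝ) : ℝ :=
  (k.factorial : ℝ)⁻¹ *
    ∑ f : Fin k → Fin (Module.finrank ℝ V),
      α (fun j => stdOrthonormalBasis ℝ V (f j)) * β (fun j => stdOrthonormalBasis ℝ V (f j))

/-- The volume form of `(V, ⟪·,·⟫, o)`. -/
def volV (o : Orientation ℝ V (Fin 8)) (hd : Module.finrank ℝ V = 8) :
    V [⋀^Fin 8]→ₗ[ℝ] ℝ :=
  letI : Fact (Module.finrank ℝ V = 8) := ⟨hd⟩
  o.volumeForm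

/-- `ψ = ∗α` for `4`-forms on `V`, w.r.t. the inner product and orientation of `V`:
`γ ∧ ψ = ⟨γ, α⟩ vol` for every four-form `γ`. -/
def IsHodgeDualV (o : Orientation ℝ V (Fin 8)) (hd : Module.finrank ℝ V = 8)
    (α ψ : V [⋀^Fin 4]→ₗ[ℝ] ℝ) : Prop :=
  ∀ γ : V [⋀^Fin 4]→ₗ[ℝ] ℝ, wedgeAM γ ψ = formInnerV 4 γ α • volV o hd

/-- The three-form `φ'` on `V` restricts, on the hyperplane `H` with the orientation induced by
`o` and `v`, to a positive three-form. -/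
def PositiveOnHyperplane (o : Orientation ℝ V (Fin 8)) (φ' : V [⋀^Fin 3]→ₗ[ℝ] ℝ)
    (v : V) (H : Submodule ℝ V) : Prop :=
  ∃ f : (Fin 8 → ℝ) ≃ₗ[ℝ] V, OrientedEquiv o f ∧
    f (Pi.single 0 1) = v ∧ (∀ x : Fin 8 → ℝ, x 0 = 0 → f x ∈ H) ∧
    φ'.compLinearMap (f.toLinearMap ∘ₗ incl7) = phi0

/-- Left multiplication by the octonion `w`. -/
def octL (w : Fin 8 → ℝ) : Matrix (Fin 8) (Fin 8) ℝ :=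
  !![w 0, -w 1, -w 2, -w 3, -w 4, -w 5, -w 6, -w 7;
     w 1, w 0, -w 3, w 2, -w 5, w 4, -w 7, w 6;
     w 2, w 3, w 0, -w 1, -w 6, w 7, w 4, -w 5;
     w 3, -w 2, w 1, w 0, w 7, w 6, -w 5, -w 4;
     w 4, w 5, w 6, -w 7, w 0, -w 1, -w 2, w 3;
     w 5, -w 4, -w 7, -w 6, w 1, w 0, w 3, w 2;
     w 6, w 7, -w 4, w 5, w 2, -w 3, w 0, -w 1;
     w 7, -w 6, w 5, w 4, -w 3, -w 2, w 1, w 0]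

/-- The squared norm. -/
def nsq (w : Fin 8 → ℝ) : ℝ := ∑ i, w i ^ 2

lemma nsq_pos {w : Fin 8 → ℝ} (hw : w ≠ 0) : 0 < nsq w := by
  obtain ⟨i, hi⟩ := Function.ne_iff.1 hw
  exact Finset.sum_pos' (fun _ _ => sq_nonneg _) ⟨i, Finset.mem_univ _, by
    have : w i ≠ 0 := hi
    positivity⟩

/-- Alternating forms agreeing on increasing tuples of basis vectors are equal. -/
lemma alt_ext {n k : ℕ} {F G : (Fin n → ℝ) [⋀^Fin k]→ₗ[ℝ] ℝ}
    (h : ∀ v : Fin k → Fin n, StrictMono v →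
      F (fun i => Pi.single (v i) 1) = G (fun i => Pi.single (v i) 1)) : F = G := by
  refine Module.Basis.ext_alternating (Pi.basisFun ℝ (Fin n)) fun v hv => ?_
  have hs : StrictMono (v ∘ Tuple.sort v) :=
    (Tuple.monotone_sort v).strictMono_of_injective (hv.comp (Tuple.sort v).injective)
  have h1 := h _ hs
  have hF := F.map_perm (fun i => (Pi.single (v i) 1 : Fin n → ℝ)) (Tuple.sort v)
  have hG := G.map_perm (fun i => (Pi.single (v i) 1 : Fin n → ℝ)) (Tuple.sort v)
  have h2 : (Equiv.Perm.sign (Tuple.sort v)) • F (fun i => (Pi.single (v i) 1 : Fin n → ℝ)) =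
      (Equiv.Perm.sign (Tuple.sort v)) • G (fun i => (Pi.single (v i) 1 : Fin n → ℝ)) := by
    rw [← hF, ← hG]; exact h1
  simpa [Pi.basisFun_apply] using h2

lemma dxs4 {n : ℕ} (i j k l : Fin n) (v : Fin 4 → Fin n → ℝ) :
    dxs ![i, j, k, l] v =
      (v 0 i * v 1 j - v 0 j * v 1 i) * (v 2 k * v 3 l - v 2 l * v 3 k)
      - (v 0 i * v 1 k - v 0 k * v 1 i) * (v 2 j * v 3 l - v 2 l * v 3 j)
      + (v 0 i * v 1 l - v 0 l * v 1 i) * (v 2 j * v 3 k - v 2 k * v 3 j)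
      + (v 0 j * v 1 k - v 0 k * v 1 j) * (v 2 i * v 3 l - v 2 l * v 3 i)
      - (v 0 j * v 1 l - v 0 l * v 1 j) * (v 2 i * v 3 k - v 2 k * v 3 i)
      + (v 0 k * v 1 l - v 0 l * v 1 k) * (v 2 i * v 3 j - v 2 j * v 3 i) := by
  have : dxs ![i, j, k, l] v = Matrix.det
    !![v 0 i, v 0 j, v 0 k, v 0 l; v 1 i, v 1 j, v 1 k, v 1 l;
       v 2 i, v 2 j, v 2 k, v 2 l; v 3 i, v 3 j, v 3 k, v 3 l] := by
    unfold dxs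
    rw [AlternatingMap.compLinearMap_apply]
    change Matrix.det _ = _
    congr 1
    ext a b
    fin_cases a <;> fin_cases b <;> rfl
  rw [this]
  simp [Matrix.det_succ_row_zero, Fin.sum_univ_succ, Fin.succAbove]
  ring

lemma dxs3 {n : ℕ} (i j k : Fin n) (v : Fin 3 → Fin n → ℝ) :
    dxs ![i, j, k] v =
      v 0 i * (v 1 j * v 2 k - v 1 k * v 2 j)
      - v 0 j * (v 1 i * v 2 k - v 1 k * v 2 i)
      + v 0 k * (v 1 i * v 2 j - v 1 j * v 2 i) := by
  have : dxs ![i, j, k] v = Matrix.det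
    !![v 0 i, v 0 j, v 0 k; v 1 i, v 1 j, v 1 k; v 2 i, v 2 j, v 2 k] := by
    unfold dxs
    rw [AlternatingMap.compLinearMap_apply]
    change Matrix.det _ = _
    congr 1
    ext a b
    fin_cases a <;> fin_cases b <;> rfl
  rw [this, Matrix.det_fin_three]
  simp
  ring

lemma Omega0_e0 (y : Fin 3 → Fin 7 → ℝ) :
    Omega0 (Matrix.vecCons (Pi.single 0 1) (fun i => incl7 (y i))) = phi0 y := by
  have h0 : ∀ z, incl7 z 0 = 0 := fun z => rfl
  have e1 : ∀ z, incl7 z 1 = z 0 := fun z => rfl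
  have e2 : ∀ z, incl7 z 2 = z 1 := fun z => rfl
  have e3 : ∀ z, incl7 z 3 = z 2 := fun z => rfl
  have e4 : ∀ z, incl7 z 4 = z 3 := fun z => rfl
  have e5 : ∀ z, incl7 z 5 = z 4 := fun z => rfl
  have e6 : ∀ z, incl7 z 6 = z 5 := fun z => rfl
  have e7 : ∀ z, incl7 z 7 = z 6 := fun z => rfl
  simp only [Omega0, phi0, AlternatingMap.add_apply, AlternatingMap.sub_apply, dxs4, dxs3]
  set v : Fin 4 → Fin 8 → ℝ := Matrix.vecCons (Pi.single 0 1) (fun i => incl7 (y i)) with hv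
  have c0 : v 0 = Pi.single 0 1 := rfl
  have c1 : v 1 = incl7 (y 0) := rfl
  have c2 : v 2 = incl7 (y 1) := rfl
  have c3 : v 3 = incl7 (y 2) := rfl
  simp [c0, c1, c2, c3, h0, e1, e2, e3, e4, e5, e6, e7]

lemma octL_sq (p : Fin 8 → ℝ) (hp : p 0 = 0) :
    octL p * octL p = -(nsq p • (1 : Matrix (Fin 8) (Fin 8) ℝ)) := by
  ext i j
  fin_cases i <;> fin_cases j <;>
    simp [octL, Matrix.mul_apply, Fin.sum_univ_succ, nsq, hp] <;> ring

lemma octL_det_pos (p : Fin 8 → ℝ) (hp : p 0 = 0) (hp' : p ≠ 0) : 0 < (octL p).det := by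
  have hN := nsq_pos hp'
  have h := octL_sq p hp
  set r := Real.sqrt (nsq p) with hr
  have hr2 : r * r = nsq p := Real.mul_self_sqrt hN.le
  have hr0 : 0 < r := Real.sqrt_pos.2 hN
  have h1 : (octL p + r • (1 : Matrix (Fin 8) (Fin 8) ℝ)) * (octL p + r • 1)
      = (2 * r) • octL p := by
    simp only [add_mul, mul_add, h, Matrix.smul_mul, Matrix.mul_smul, one_mul, mul_one, smul_smul,
      hr2]
    module
  have h2 := congrArg Matrix.det h1
  rw [Matrix.det_mul, Matrix.det_smul] at h2
  have h3 : (octL p).det ≠ 0 := by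
    intro h0
    have h4 := congrArg Matrix.det h
    rw [Matrix.det_mul, h0, ← neg_smul, Matrix.det_smul, Matrix.det_one] at h4
    have : (-nsq p) ^ Fintype.card (Fin 8) ≠ 0 := pow_ne_zero _ (by linarith)
    simp_all
  refine lt_of_le_of_ne ?_ (Ne.symm h3)
  have h5 : 0 ≤ (2 * r) ^ Fintype.card (Fin 8) * (octL p).det := h2 ▸ mul_self_nonneg _
  exact nonneg_of_mul_nonneg_right h5 (by positivity)

lemma exists_factor (w : Fin 8 → ℝ) (hw : w ≠ 0) : ∃ p q : Fin 8 → ℝ, p 0 = 0 ∧ q 0 = 0 ∧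
    p ≠ 0 ∧ q ≠ 0 ∧ (octL p).mulVec q = w := by
  obtain ⟨q, hq0, hq, hqw⟩ : ∃ q : Fin 8 → ℝ, q 0 = 0 ∧ q ≠ 0 ∧ q 1 * w 1 + q 2 * w 2 = 0 ∧
      q 3 = 0 ∧ q 4 = 0 ∧ q 5 = 0 ∧ q 6 = 0 ∧ q 7 = 0 := by
    by_cases h : w 1 = 0
    · refine ⟨![0, 1, 0, 0, 0, 0, 0, 0], rfl, fun h' => ?_, ?_, rfl, rfl, rfl, rfl, rfl⟩
      · simpa using congrFun h' 1
      · simp [h]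
    · refine ⟨![0, w 2, -w 1, 0, 0, 0, 0, 0], rfl, fun h' => ?_, ?_, rfl, rfl, rfl, rfl, rfl⟩
      · exact h (by simpa using congrFun h' 2)
      · simp; ring
  obtain ⟨hqw, h3, h4, h5, h6, h7⟩ := hqw
  have hN := nsq_pos hq
  have key : (octL (-(nsq q)⁻¹ • (octL w).mulVec q)).mulVec q = w := by
    have : (octL (-(nsq q)⁻¹ • (octL w).mulVec q)).mulVec q =
        (nsq q)⁻¹ • (nsq q • w) := by
      ext i
      fin_cases i <;>
        simp [octL, Matrix.mulVec, dotProduct, Fin.sum_univ_succ, nsq, hq0, h3, h4, h5, h6, h7] <;>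
        ring
    rw [this, smul_smul, inv_mul_cancel₀ hN.ne', one_smul]
  refine ⟨_, q, ?_, hq0, ?_, hq, key⟩
  · simp [octL, dotProduct, Fin.sum_univ_succ, hq0, h3, h4, h5, h6, h7]
    right; linarith
  · intro h0
    rw [h0] at key
    apply hw
    rw [← key]
    ext i
    fin_cases i <;> simp [octL, Matrix.mulVec, dotProduct, Fin.sum_univ_succ]

/-- The Cayley form as an explicit polynomial. -/
def OmP (x y z t : Fin 8 → ℝ) : ℝ := Omega0 ![x, y, z, t]

set_option maxHeartbeats 0 in
lemma OmP_octL (p : Fin 8 → ℝ) (hp : p 0 = 0) (a b c d : Fin 8) (h01 : a < b) (h12 : b < c)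
    (h23 : c < d) :
    OmP ((octL p).col a) ((octL p).col b) ((octL p).col c) ((octL p).col d) =
    (p 1 ^ 2 + p 2 ^ 2 + p 3 ^ 2 + p 4 ^ 2 + p 5 ^ 2 + p 6 ^ 2 + p 7 ^ 2) ^ 2 *
      OmP (Pi.single a 1) (Pi.single b 1) (Pi.single c 1) (Pi.single d 1) := by
  fin_cases a <;> fin_cases b <;> (first | exact absurd h01 (by decide) | clear h01) <;>
    fin_cases c <;> (first | exact absurd h12 (by decide) | clear h12) <;>
    fin_cases d <;> (first | exact absurd h23 (by decide) | clear h23) <;>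
    (simp [OmP, Omega0, dxs4, octL, hp]; try ring)

lemma Omega0_octL (p : Fin 8 → ℝ) (hp : p 0 = 0) :
    Omega0.compLinearMap (Matrix.toLin' (octL p)) = (nsq p ^ 2) • Omega0 := by
  refine alt_ext fun v hv => ?_
  have h01 : v 0 < v 1 := hv (by decide)
  have h12 : v 1 < v 2 := hv (by decide)
  have h23 : v 2 < v 3 := hv (by decide)
  have hN : nsq p = p 1 ^ 2 + p 2 ^ 2 + p 3 ^ 2 + p 4 ^ 2 + p 5 ^ 2 + p 6 ^ 2 + p 7 ^ 2 := by
    simp [nsq, Fin.sum_univ_succ, hp]; ring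
  have h := OmP_octL p hp _ _ _ _ h01 h12 h23
  have e1 : (fun i => Matrix.toLin' (octL p) (Pi.single (v i) 1)) =
      ![(octL p).col (v 0), (octL p).col (v 1), (octL p).col (v 2), (octL p).col (v 3)] := by
    ext1 i
    rw [Matrix.toLin'_apply, Matrix.mulVec_single_one]
    fin_cases i <;> simp
  have e2 : (fun i => (Pi.single (v i) 1 : Fin 8 → ℝ)) =
      ![Pi.single (v 0) 1, Pi.single (v 1) 1, Pi.single (v 2) 1, Pi.single (v 3) 1] := by
    ext1 i
    fin_cases i <;> simp
  rw [AlternatingMap.compLinearMap_apply, AlternatingMap.smul_apply, e1, e2, hN, smul_eq_mul]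
  exact h

lemma comp_comp_alt {n k : ℕ} (F : (Fin n → ℝ) [⋀^Fin k]→ₗ[ℝ] ℝ)
    (A B : (Fin n → ℝ) →ₗ[ℝ] (Fin n → ℝ)) :
    (F.compLinearMap A).compLinearMap B = F.compLinearMap (A ∘ₗ B) := rfl

lemma smul_comp_alt {n k : ℕ} (F : (Fin n → ℝ) [⋀^Fin k]→ₗ[ℝ] ℝ) (c : ℝ)
    (A : (Fin n → ℝ) →ₗ[ℝ] (Fin n → ℝ)) :
    (c • F).compLinearMap A = c • F.compLinearMap A := rfl

lemma curry_kill (Ω : V [⋀^Fin 4]→ₗ[ℝ] ℝ) (v : V) (m : Fin 3 → V) (i : Fin 3) (t : ℝ)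
    (h : m i = t • v) : Ω.curryLeft v m = 0 := by
  have h1 : m = Function.update m i (t • v) := by rw [← h, Function.update_eq_self]
  rw [h1, AlternatingMap.map_update_smul, AlternatingMap.curryLeft_apply_apply]
  rw [Ω.map_eq_zero_of_eq _ (i := 0) (j := i.succ) (by simp) (Fin.succ_ne_zero i).symm, smul_zero]

lemma curry_shift (Ω : V [⋀^Fin 4]→ₗ[ℝ] ℝ) (v : V) (c : ℝ) (z : Fin 3 → V) (t : Fin 3 → ℝ) :
    Ω.curryLeft v (fun i => c • z i + t i • v) = c ^ 3 * Ω.curryLeft v z := by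
  have h := (Ω.curryLeft v).toMultilinearMap.map_add_univ (fun i => c • z i) (fun i => t i • v)
  have h2 : Ω.curryLeft v (fun i => c • z i + t i • v) = Ω.curryLeft v (fun i => c • z i) := by
    refine Eq.trans h ?_
    rw [Finset.sum_eq_single Finset.univ]
    · rw [Finset.piecewise_univ]; rfl
    · intro s _ hs
      obtain ⟨i, hi⟩ : ∃ i, i ∉ s := by
        by_contra! hc
        exact hs (Finset.eq_univ_iff_forall.2 hc)
      exact curry_kill Ω v _ i (t i) (by simp [hi])
    · simp
  rw [h2]
  have := (Ω.curryLeft v).toMultilinearMap.map_smul_univ (fun _ => c) z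
  rw [Finset.prod_const, Finset.card_univ, Fintype.card_fin, smul_eq_mul] at this
  exact this

/-- For each nonzero `w`, a conformal element of `Spin(7)` sending `e₀` to `w`. -/
lemma exists_transport (w : Fin 8 → ℝ) (hw : w ≠ 0) :
    ∃ (B : (Fin 8 → ℝ) →ₗ[ℝ] (Fin 8 → ℝ)) (K : ℝ), 0 < K ∧ 0 < LinearMap.det B ∧
      B (Pi.single 0 1) = w ∧ Omega0.compLinearMap B = K • Omega0 := by
  obtain ⟨p, q, hp, hq, hp0, hq0, hpq⟩ := exists_factor w hw
  have h1 := nsq_pos hp0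
  have h2 := nsq_pos hq0
  refine ⟨Matrix.toLin' (octL p) ∘ₗ Matrix.toLin' (octL q), nsq p ^ 2 * nsq q ^ 2,
    by positivity, ?_, ?_, ?_⟩
  · rw [LinearMap.det_comp, LinearMap.det_toLin', LinearMap.det_toLin']
    exact mul_pos (octL_det_pos p hp hp0) (octL_det_pos q hq hq0)
  · rw [← hpq, LinearMap.comp_apply, Matrix.toLin'_apply, Matrix.toLin'_apply,
      Matrix.mulVec_single_one]
    congr 1
    ext i
    fin_cases i <;> simp [octL]
  · rw [← comp_comp_alt, Omega0_octL p hp, smul_comp_alt, Omega0_octL q hq, smul_smul]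

/-- If `Ω` is an admissible four-form on the oriented 8-dimensional space `V`,
then for every nonzero `v ∈ V` and every 7-dimensional subspace `H` transverse to `v`, the
restriction `(ι_v Ω)|_H` is a positive three-form on `H` (with the orientation induced by that
of `V` and `v`). -/
theorem positive_restriction_of_admissible
    (o : Orientation ℝ V (Fin 8)) (hd : Module.finrank ℝ V = 8)
    (Ω : V [⋀^Fin 4]→ₗ[ℝ] ℝ) (hΩ : AdmissibleForm o Ω)
    (v : V) (hv : v ≠ 0) (H : Submodule ℝ V) (hH : Module.finrank ℝ H = 7) (htrans : v ∉ H) :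
    PositiveOnHyperplane o (Ω.curryLeft v) v H := by
  obtain ⟨f₀, hor, hf₀⟩ := hΩ
  have hw : f₀.symm v ≠ 0 := by simpa using hv
  obtain ⟨B, K, hK, hdet, hB0, hBK⟩ := exists_transport (f₀.symm v) hw
  -- the functional with kernel `H`
  obtain ⟨g, hgv, hHg⟩ := Submodule.exists_le_ker_of_notMem htrans
  have hker : H = LinearMap.ker g := by
    refine Submodule.eq_of_le_of_finrank_le hHg ?_
    have h1 := LinearMap.finrank_range_add_finrank_ker g
    have h2 : 0 < Module.finrank ℝ (LinearMap.range g) := by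
      rw [Module.finrank_pos_iff_exists_ne_zero]
      exact ⟨⟨g v, LinearMap.mem_range_self g v⟩, fun h => hgv (by simpa using h)⟩
    omega
  -- the scaling constant
  obtain ⟨c, hc, hcK⟩ : ∃ c : ℝ, 0 < c ∧ c ^ 3 * K = 1 := by
    refine ⟨K⁻¹ ^ ((3 : ℕ) : ℝ)⁻¹, by positivity, ?_⟩
    rw [Real.rpow_inv_natCast_pow (by positivity) (by norm_num), inv_mul_cancel₀ hK.ne']
  set D : Matrix (Fin 8) (Fin 8) ℝ := Matrix.diagonal (fun i => if i = 0 then 1 else c) with hD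
  have hDdet : 0 < D.det := by
    rw [hD, Matrix.det_diagonal]
    refine Finset.prod_pos fun i _ => ?_
    split_ifs <;> positivity
  have hDe : Matrix.toLin' D (Pi.single 0 1) = Pi.single 0 1 := by
    ext i
    rw [Matrix.toLin'_apply, hD, Matrix.mulVec_diagonal]
    by_cases hi : i = 0 <;> simp [hi]
  have hDx : ∀ x : Fin 8 → ℝ, x 0 = 0 → Matrix.toLin' D x = c • x := by
    intro x hx
    ext i
    rw [Matrix.toLin'_apply, hD, Matrix.mulVec_diagonal]
    by_cases hi : i = 0 <;> simp [hi, hx]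
  set M : (Fin 8 → ℝ) →ₗ[ℝ] (Fin 8 → ℝ) := B ∘ₗ Matrix.toLin' D with hM
  have hMdet : 0 < LinearMap.det M := by
    rw [hM, LinearMap.det_comp, LinearMap.det_toLin']
    exact mul_pos hdet hDdet
  let E : (Fin 8 → ℝ) ≃ₗ[ℝ] (Fin 8 → ℝ) := LinearMap.equivOfDetNeZero M hMdet.ne'
  have hE : ∀ x, E x = M x := fun x => rfl
  have hM0 : f₀ (M (Pi.single 0 1)) = v := by
    rw [hM, LinearMap.comp_apply, hDe, hB0, LinearEquiv.apply_symm_apply]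
  -- the shear
  let lam : Module.Dual ℝ (Fin 8 → ℝ) := -((g v)⁻¹ • (g ∘ₗ f₀.toLinearMap ∘ₗ M)) +
    LinearMap.proj 0
  have hlam : ∀ x, lam x = -((g v)⁻¹ * g (f₀ (M x))) + x 0 := fun x => rfl
  have hlam0 : lam (Pi.single 0 1) = 0 := by
    rw [hlam, hM0, inv_mul_cancel₀ hgv]; simp
  let U : (Fin 8 → ℝ) ≃ₗ[ℝ] (Fin 8 → ℝ) := LinearEquiv.transvection hlam0
  have hU : ∀ x, U x = x + lam x • Pi.single 0 1 := fun x => rfl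
  have hf : ∀ x, (U.trans (E.trans f₀)) x = f₀ (M x) + lam x • v := by
    intro x
    rw [LinearEquiv.trans_apply, LinearEquiv.trans_apply, hU, hE, map_add, map_smul, map_add,
      map_smul, hM0]
  refine ⟨U.trans (E.trans f₀), ?_, ?_, ?_, ?_⟩
  · have hUE : Orientation.map (Fin 8) (U.trans E) ((Pi.basisFun ℝ (Fin 8)).orientation) =
        (Pi.basisFun ℝ (Fin 8)).orientation := by
      rw [Orientation.map_eq_iff_det_pos _ _ (by simp)]
      have : ((U.trans E : (Fin 8 → ℝ) ≃ₗ[ℝ] (Fin 8 → ℝ)) : (Fin 8 → ℝ) →ₗ[ℝ] (Fin 8 → ℝ)) =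
        M ∘ₗ U.toLinearMap := rfl
      rw [this, LinearMap.det_comp]
      have hUd : LinearMap.det U.toLinearMap = 1 := by
        have hUe : U.toLinearMap = LinearMap.transvection lam (Pi.single 0 1) :=
          LinearEquiv.transvection.coe_toLinearMap hlam0
        rw [hUe, LinearMap.transvection.det, hlam0, add_zero]
      rw [hUd, mul_one]
      exact hMdet
    unfold OrientedEquiv at hor ⊢
    rw [← hor]
    conv_rhs => rw [← hUE]
    generalize (Pi.basisFun ℝ (Fin 8)).orientation = o'
    induction o' using Module.Ray.ind with
    | h u hu => rfl
  · rw [hf, hM0, hlam0, zero_smul, add_zero]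
  · intro x hx
    rw [hker, LinearMap.mem_ker, hf, map_add, map_smul, hlam, hx, smul_eq_mul]
    field_simp
    ring
  · ext y
    have hy : (fun i => (((U.trans (E.trans f₀)).toLinearMap ∘ₗ incl7)) (y i)) =
        fun i => c • f₀ (B (incl7 (y i))) + lam (incl7 (y i)) • v := by
      ext1 i
      rw [LinearMap.comp_apply]
      refine (hf _).trans ?_
      rw [hM, LinearMap.comp_apply, hDx _ rfl, map_smul, map_smul]
    rw [AlternatingMap.compLinearMap_apply]
    refine (congrArg _ hy).trans ?_
    rw [curry_shift]
    have h1 : Ω.curryLeft v (fun i => f₀ (B (incl7 (y i)))) =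
        (Ω.compLinearMap f₀.toLinearMap).compLinearMap B
          (Matrix.vecCons (Pi.single 0 1) (fun i => incl7 (y i))) := by
      rw [AlternatingMap.curryLeft_apply_apply, AlternatingMap.compLinearMap_apply,
        AlternatingMap.compLinearMap_apply]
      congr 1
      ext1 i
      refine Fin.cases ?_ (fun j => ?_) i
      · simp [hB0]
      · simp
    rw [h1, hf₀, hBK, AlternatingMap.smul_apply, Omega0_e0, smul_eq_mul, ← mul_assoc, hcK, one_mul]

end
end
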